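/- Let κ ≥ 0, λ > 0, σ > 0, and let b(t) = (e^{−σt} − 1)/(e^{−σ} − 1) be an eager unit strategy. Define a(t) = e^{−σt} [ λ e^{σ}(σ − κ) − t e^{σt}((λ+2)σ − κλ) + e^{σ + σt}(−λσ + κλ(1 − t) + (λ+2)σt) ] / (2(e^{σ} − 1)σ). Then a is a unit trading strategy and is the best response to b: for every continuously differentiable unit trading strategy g, Cost_A(a, b) ≤ Cost_A(g, b). -/

import Mathlib

open Real

/-- The total cost of trader A trading strategy `a` in competition with the
`lam`-scaled strategy `b`, with market impact coefficient `κ`. -/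
noncomputable def costA (κ lam : ℝ) (a b : ℝ → ℝ) : ℝ :=
  ∫ t in (0:ℝ)..1,
    ((deriv a t + lam * deriv b t) * deriv a t + κ * (a t + lam * b t) * deriv a t)

/-!
The self-impact term `κ a a'` is the derivative of `κ a² / 2`, so it contributes the same to the
cost of every unit strategy, and the Euler–Lagrange equation has the first integral
`2 a' + λ (b' + κ b) = K`. If `a` satisfies it, completing the square turns the cost of a unit
strategy `g` into `∫ (g' - a')²` plus a constant, which is smallest at `g = a`. An eager `b` solves
`b' + σ b = C`, so along it the first integral prescribes `a'` as an affine function of `b'`.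
-/

open MeasureTheory Set
open scoped Interval

section Strategies

/-- A unit trading strategy of finite energy: absolutely continuous on `[0, 1]`, with
square-integrable derivative, going from `0` to `1`. If `f'` were not square-integrable, the
integral `costA κ lam f b` would, for `b` of class `C¹`, diverge and take the junk value `0`. -/
structure IsUnitStrategy (f : ℝ → ℝ) : Prop where
  absolutelyContinuous : AbsolutelyContinuousOnInterval f 0 1
  memLp_deriv : MemLp (deriv f) 2 (volume.restrict (Ioc 0 1))
  map_zero : f 0 = 0
  map_one : f 1 = 1

/-- `a` is a best response to `lam`-scaled `b`: it minimizes `costA κ lam · b` among the unit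
strategies of finite energy. -/
structure IsBestResponse (κ lam : ℝ) (a b : ℝ → ℝ) : Prop where
  isUnitStrategy : IsUnitStrategy a
  costA_le : ∀ g, IsUnitStrategy g → costA κ lam a b ≤ costA κ lam g b

/-- The first integral, with constant `K`, of the Euler–Lagrange equation
`2 a'' + lam (b'' + κ b') = 0` of `costA κ lam · b`. -/
def HasFirstIntegral (κ lam K : ℝ) (a b : ℝ → ℝ) : Prop :=
  ∀ᵐ t, t ∈ Ι (0 : ℝ) 1 → 2 * deriv a t + lam * (deriv b t + κ * b t) = K

variable {κ lam K : ℝ} {a b f g : ℝ → ℝ}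

theorem IsUnitStrategy.of_contDiff (hf : ContDiff ℝ 1 f) (h0 : f 0 = 0) (h1 : f 1 = 1) :
    IsUnitStrategy f where
  absolutelyContinuous := hf.contDiffOn.absolutelyContinuousOnInterval
  memLp_deriv := by
    have hf' : Continuous (deriv f) := hf.continuous_deriv le_rfl
    exact (memLp_two_iff_integrable_sq hf'.aestronglyMeasurable).2
      ((hf'.pow 2).integrableOn_Ioc)
  map_zero := h0
  map_one := h1

theorem intervalIntegrable_sq_of_memLp_two {x y : ℝ} (hxy : x ≤ y)
    (hf : MemLp f 2 (volume.restrict (Ioc x y))) :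
    IntervalIntegrable (fun t ↦ f t ^ 2) volume x y :=
  (intervalIntegrable_iff_integrableOn_Ioc_of_le hxy).2 hf.integrable_sq

theorem integral_mul_deriv_self {x y : ℝ} (hf : AbsolutelyContinuousOnInterval f x y) :
    ∫ t in x..y, f t * deriv f t = (f y ^ 2 - f x ^ 2) / 2 := by
  have by_parts := hf.integral_mul_deriv_eq_deriv_mul hf
  simp only [mul_comm (deriv f _)] at by_parts
  linarith

theorem HasFirstIntegral.costA_eq (h : HasFirstIntegral κ lam K a b)
    (ha' : MemLp (deriv a) 2 (volume.restrict (Ioc 0 1)))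
    (hg : AbsolutelyContinuousOnInterval g 0 1)
    (hg' : MemLp (deriv g) 2 (volume.restrict (Ioc 0 1))) :
    costA κ lam g b =
      (∫ t in (0 : ℝ)..1, (deriv g t - deriv a t) ^ 2) - (∫ t in (0 : ℝ)..1, deriv a t ^ 2) +
        K * (g 1 - g 0) + κ * ((g 1 ^ 2 - g 0 ^ 2) / 2) := by
  have hsub : IntervalIntegrable (fun t ↦ (deriv g t - deriv a t) ^ 2) volume 0 1 :=
    intervalIntegrable_sq_of_memLp_two zero_le_one (hg'.sub ha')
  have hsq := intervalIntegrable_sq_of_memLp_two zero_le_one ha'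
  have hlin := hg.intervalIntegrable_deriv.const_mul K
  have hself := (hg.intervalIntegrable_deriv.continuousOn_mul hg.continuousOn).const_mul κ
  calc costA κ lam g b
    _ = ∫ t in (0 : ℝ)..1, ((deriv g t - deriv a t) ^ 2 - deriv a t ^ 2 + K * deriv g t +
          κ * (g t * deriv g t)) := by
      refine intervalIntegral.integral_congr_ae ?_
      filter_upwards [h] with t ht ht01
      linear_combination deriv g t * ht ht01
    _ = _ := by
      rw [intervalIntegral.integral_add ((hsub.sub hsq).add hlin) hself,
        intervalIntegral.integral_add (hsub.sub hsq) hlin, intervalIntegral.integral_sub hsub hsq,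
        intervalIntegral.integral_const_mul, intervalIntegral.integral_const_mul,
        hg.integral_deriv_eq_sub, integral_mul_deriv_self hg]

theorem HasFirstIntegral.costA_eq_costA_add_integral_sq (h : HasFirstIntegral κ lam K a b)
    (ha : IsUnitStrategy a) (hg : IsUnitStrategy g) :
    costA κ lam g b = costA κ lam a b + ∫ t in (0 : ℝ)..1, (deriv g t - deriv a t) ^ 2 := by
  rw [h.costA_eq ha.memLp_deriv ha.absolutelyContinuous ha.memLp_deriv,
    h.costA_eq ha.memLp_deriv hg.absolutelyContinuous hg.memLp_deriv,
    ha.map_zero, ha.map_one, hg.map_zero, hg.map_one]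
  simp only [sub_self, zero_pow two_ne_zero, intervalIntegral.integral_zero]
  ring

theorem HasFirstIntegral.isBestResponse (h : HasFirstIntegral κ lam K a b)
    (ha : IsUnitStrategy a) : IsBestResponse κ lam a b where
  isUnitStrategy := ha
  costA_le g hg := by
    rw [h.costA_eq_costA_add_integral_sq ha hg]
    exact le_add_of_nonneg_right
      (intervalIntegral.integral_nonneg zero_le_one fun t _ ↦ sq_nonneg _)

end Strategies

section Eager

/-- The eager unit strategy with eagerness `σ`; it is identically `0`, by division by zero, when
`σ = 0`. -/
noncomputable def eager (σ t : ℝ) : ℝ :=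
  (exp (-σ * t) - 1) / (exp (-σ) - 1)

/-- The best response to the `lam`-scaled strategy `eager σ`. Since `b = eager σ` satisfies
`b' + σ b = C`, the first integral reads `2 a' = const - lam (1 - κ / σ) b'`; the endpoint
conditions then determine `a`. -/
noncomputable def eagerResponse (κ lam σ t : ℝ) : ℝ :=
  t + lam * (σ - κ) / (2 * σ) * (t - eager σ t)

variable {κ lam σ : ℝ}

theorem exp_neg_sub_one_ne_zero (hσ : σ ≠ 0) : exp (-σ) - 1 ≠ 0 := by
  simpa [sub_eq_zero] using hσ

theorem contDiff_eager {n : WithTop ℕ∞} : ContDiff ℝ n (eager σ) := by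
  unfold eager
  fun_prop

theorem eager_zero : eager σ 0 = 0 := by
  simp [eager]

theorem eager_one (hσ : σ ≠ 0) : eager σ 1 = 1 := by
  simp [eager, exp_neg_sub_one_ne_zero hσ]

theorem deriv_eager_add_mul (t : ℝ) :
    deriv (eager σ) t + σ * eager σ t = -σ / (exp (-σ) - 1) := by
  have hderiv : HasDerivAt (eager σ) (exp (-σ * t) * (-σ) / (exp (-σ) - 1)) t :=
    ((hasDerivAt_const_mul (-σ)).exp.sub_const 1).div_const _
  rw [hderiv.deriv, eager]
  ring

theorem deriv_eagerResponse (t : ℝ) :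
    deriv (eagerResponse κ lam σ) t =
      1 + lam * (σ - κ) / (2 * σ) * (1 - deriv (eager σ) t) := by
  have hb : HasDerivAt (eager σ) (deriv (eager σ) t) t :=
    ((contDiff_eager (n := 1)).differentiable one_ne_zero t).hasDerivAt
  exact ((hasDerivAt_id t).add (((hasDerivAt_id t).sub hb).const_mul _)).deriv

theorem isUnitStrategy_eagerResponse (hσ : σ ≠ 0) :
    IsUnitStrategy (eagerResponse κ lam σ) := by
  refine .of_contDiff ?_ ?_ ?_
  · have heager : ContDiff ℝ 1 (eager σ) := contDiff_eager
    unfold eagerResponse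
    fun_prop
  · simp [eagerResponse, eager_zero]
  · simp [eagerResponse, eager_one hσ]

theorem hasFirstIntegral_eagerResponse (hσ : σ ≠ 0) :
    HasFirstIntegral κ lam (2 + lam * (σ - κ) / σ - lam * κ / (exp (-σ) - 1))
      (eagerResponse κ lam σ) (eager σ) := by
  refine .of_forall fun t _ ↦ ?_
  calc 2 * deriv (eagerResponse κ lam σ) t + lam * (deriv (eager σ) t + κ * eager σ t)
    _ = 2 + lam * (σ - κ) / σ + lam * κ / σ * (deriv (eager σ) t + σ * eager σ t) := by
      rw [deriv_eagerResponse]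
      field_simp
      ring
    _ = _ := by
      rw [deriv_eager_add_mul]
      field_simp
      ring

theorem isBestResponse_eagerResponse (hσ : σ ≠ 0) :
    IsBestResponse κ lam (eagerResponse κ lam σ) (eager σ) :=
  (hasFirstIntegral_eagerResponse hσ).isBestResponse (isUnitStrategy_eagerResponse hσ)

theorem eagerResponse_eq (hσ : σ ≠ 0) (t : ℝ) :
    eagerResponse κ lam σ t =
      exp (-σ * t) *
        (lam * exp σ * (σ - κ)
          - t * exp (σ * t) * ((lam + 2) * σ - κ * lam)
          + exp (σ + σ * t) * (-(lam * σ) + κ * lam * (1 - t) + (lam + 2) * σ * t))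
        / (2 * (exp σ - 1) * σ) := by
  have hexp : exp σ - 1 ≠ 0 := by simpa using exp_neg_sub_one_ne_zero (neg_ne_zero.2 hσ)
  have hneg := exp_neg_sub_one_ne_zero hσ
  have hmul : exp (-σ) * exp σ = 1 := by rw [← exp_add, neg_add_cancel, exp_zero]
  have heager : eager σ t = exp σ * (1 - exp (-σ * t)) / (exp σ - 1) := by
    rw [eager, div_eq_div_iff hneg hexp]
    linear_combination (exp (-σ * t) - 1) * hmul
  rw [eagerResponse, heager, neg_mul, exp_neg, exp_add]
  field_simp
  ring

end Eager

theorem best_response_to_eager_general (κ lam σ : ℝ) (hσ : σ ≠ 0) (a b : ℝ → ℝ)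
    (hb : ∀ t : ℝ, b t = (Real.exp (-σ * t) - 1) / (Real.exp (-σ) - 1))
    (ha : ∀ t : ℝ, a t =
      Real.exp (-σ * t) *
        (lam * Real.exp σ * (σ - κ)
          - t * Real.exp (σ * t) * ((lam + 2) * σ - κ * lam)
          + Real.exp (σ + σ * t) * (-(lam * σ) + κ * lam * (1 - t) + (lam + 2) * σ * t))
        / (2 * (Real.exp σ - 1) * σ)) :
    IsBestResponse κ lam a b := by
  obtain rfl : b = eager σ := funext hb
  obtain rfl : a = eagerResponse κ lam σ := funext fun t ↦ (ha t).trans (eagerResponse_eq hσ t).symm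
  exact isBestResponse_eagerResponse hσ

theorem best_response_to_eager (κ lam σ : ℝ) (hκ : 0 ≤ κ) (hlam : 0 < lam)
    (hσ : 0 < σ) (a b : ℝ → ℝ)
    (hb : ∀ t : ℝ, b t = (Real.exp (-σ * t) - 1) / (Real.exp (-σ) - 1))
    (ha : ∀ t : ℝ, a t =
      Real.exp (-σ * t) *
        (lam * Real.exp σ * (σ - κ)
          - t * Real.exp (σ * t) * ((lam + 2) * σ - κ * lam)
          + Real.exp (σ + σ * t) * (-(lam * σ) + κ * lam * (1 - t) + (lam + 2) * σ * t))
        / (2 * (Real.exp σ - 1) * σ)) :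
    a 0 = 0 ∧ a 1 = 1 ∧
      ∀ g : ℝ → ℝ, ContDiff ℝ 1 g → g 0 = 0 → g 1 = 1 →
        costA κ lam a b ≤ costA κ lam g b := by
  have h := best_response_to_eager_general κ lam σ hσ.ne' a b hb ha
  exact ⟨h.isUnitStrategy.map_zero, h.isUnitStrategy.map_one,
    fun g hg h0 h1 ↦ h.costA_le g (.of_contDiff hg h0 h1)⟩
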